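/- Let u be a λ-mode solution with initial data (0,ψ), where ψ is smooth and compactly supported in (2M,∞). If the zero function is a forward radiation field of u at null infinity (i.e., for every τ̄ ∈ ℝ, r·∂ₜu(τ̄ + r_*(r), r) → 0 as r → +∞), then ψ = 0 identically on (2M,∞). (Null-infinity half of Corollary 1.4, for a single spherical-harmonic mode.) -/

import Mathlib

/-!
The product `v = r u`, read in the tortoise coordinate `x = r_*`, solves the one-dimensional
equation `∂²_t v - ∂²_x v + V v = 0` on the whole plane, where
`V = (1 - 2M/r) (λ²/r² + 2M/r³)` is `O(1/r²)`. In the null coordinates `p = t - x`, `q = t + x`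
this reads `∂_q ∂_p w = -(V/4) w`, and the statement becomes a unique continuation property that
needs no spectral theory.

Choose `R` so that the data vanish for `x ≥ R`.

* By finite speed of propagation (`cauchy_zero`), `w = 0` where `p ≤ -R` and `t ≥ 0`, in
  particular on the outgoing ray `p = -R`, `q ≥ R`.
* The region `p ≥ -R`, `q ≥ R` carries a Goursat problem with data on that ray and at null
  infinity `q = ∞`. Since `V` is integrable along outgoing rays, `w` is bounded on strips
  `-R ≤ p ≤ P` (`NullSol.bounded`), so `∂_q w → 0`; the vanishing radiation field says that
  `∂_t v = ∂_p w + ∂_q w → 0`, hence `∂_p w → 0`. Integrating `∂_q ∂_p w` from infinity and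
  `∂_p w` from the ray, a Gronwall argument gives `w = 0` (`NullSol.goursat`).
* The data `(0, ψ)` make `v` odd in `t` (`NullSol.odd`), so `v = 0` for all `t` and all `x ≥ R`.
* The equation is hyperbolic with `x` as the evolution variable too: zero Cauchy data on the
  timelike line `x = R + 1` force `v = 0` everywhere (`NullSol.eq_zero`), hence `ψ = 0`.

The reduction from the mode equation is `IsModeSolution.nullSol`, and `rwPot_bound` is the decay
of the potential.
-/

open MeasureTheory Filter Set Function
open scoped ContDiff

/-- The tortoise coordinate `r_* = r + 2M log(r - 2M)`. -/
noncomputable def rstar (M r : ℝ) : ℝ := r + 2*M*Real.log (r - 2*M)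

/-- Partial derivative of `u` in the first (time) variable. -/
noncomputable def pdt (u : ℝ → ℝ → ℝ) (t r : ℝ) : ℝ := deriv (fun s => u s r) t

/-- Second partial derivative of `u` in the first (time) variable. -/
noncomputable def pdtt (u : ℝ → ℝ → ℝ) (t r : ℝ) : ℝ := deriv (fun s => pdt u s r) t

/-- Partial derivative of `u` in the second (radial) variable. -/
noncomputable def pdr (u : ℝ → ℝ → ℝ) (t r : ℝ) : ℝ := deriv (fun s => u t s) r

/-- Second partial derivative of `u` in the second (radial) variable. -/
noncomputable def pdrr (u : ℝ → ℝ → ℝ) (t r : ℝ) : ℝ := deriv (fun s => pdr u t s) r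

/-- `u(t,r)` is a λ-mode solution of the wave equation on the mass-`M`
Schwarzschild exterior: it is smooth on `ℝ × (2M,∞)` and satisfies
`−(r/(r−2M))·∂²ₜu + ((r−2M)/r)·∂²ᵣu + (2(r−M)/r²)·∂ᵣu − (λ²/r²)·u = 0` there. -/
def IsModeSolution (M lam : ℝ) (u : ℝ → ℝ → ℝ) : Prop :=
  ContDiffOn ℝ ∞ (Function.uncurry u) ((Set.univ : Set ℝ) ×ˢ Set.Ioi (2*M)) ∧
  ∀ t r : ℝ, 2*M < r →
    -(r/(r-2*M)) * pdtt u t r + ((r-2*M)/r) * pdrr u t r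
      + (2*(r-M)/r^2) * pdr u t r - lam^2/r^2 * u t r = 0

/-- `f` is a forward radiation field of `u` at the event horizon:
`∂ₜu(τ − r_*(r), r) → f(τ)` as `r → 2M⁺`. -/
def IsFwdRadHorizon (M : ℝ) (u : ℝ → ℝ → ℝ) (f : ℝ → ℝ) : Prop :=
  ∀ τ : ℝ, Filter.Tendsto (fun r => pdt u (τ - rstar M r) r)
    (nhdsWithin (2*M) (Set.Ioi (2*M))) (nhds (f τ))

/-- `f` is a backward radiation field of `u` at the event horizon:
`∂ₜu(τ + r_*(r), r) → f(τ)` as `r → 2M⁺`. -/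
def IsBwdRadHorizon (M : ℝ) (u : ℝ → ℝ → ℝ) (f : ℝ → ℝ) : Prop :=
  ∀ τ : ℝ, Filter.Tendsto (fun r => pdt u (τ + rstar M r) r)
    (nhdsWithin (2*M) (Set.Ioi (2*M))) (nhds (f τ))

/-- `g` is a forward radiation field of `u` at null infinity:
`r·∂ₜu(τ̄ + r_*(r), r) → g(τ̄)` as `r → ∞`. -/
def IsFwdRadInfty (M : ℝ) (u : ℝ → ℝ → ℝ) (g : ℝ → ℝ) : Prop :=
  ∀ τ : ℝ, Filter.Tendsto (fun r => r * pdt u (τ + rstar M r) r)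
    Filter.atTop (nhds (g τ))

/-- `g` is a backward radiation field of `u` at null infinity:
`r·∂ₜu(τ̄ − r_*(r), r) → g(τ̄)` as `r → ∞`. -/
def IsBwdRadInfty (M : ℝ) (u : ℝ → ℝ → ℝ) (g : ℝ → ℝ) : Prop :=
  ∀ τ : ℝ, Filter.Tendsto (fun r => r * pdt u (τ - rstar M r) r)
    Filter.atTop (nhds (g τ))


/-! ### Sup-norm estimates in null coordinates -/

/-- Mean value inequality with a variable bound on the derivative. -/
lemma abs_sub_le_of_abs_deriv_le {f g f' g' : ℝ → ℝ} {x y : ℝ} (hxy : x ≤ y)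
    (hf : ∀ s, x ≤ s → s ≤ y → HasDerivAt f (f' s) s)
    (hg : ∀ s, x ≤ s → s ≤ y → HasDerivAt g (g' s) s)
    (hle : ∀ s, x ≤ s → s ≤ y → |f' s| ≤ g' s) :
    |f y - f x| ≤ g y - g x := by
  have key : ∀ h h' : ℝ → ℝ, (∀ s, x ≤ s → s ≤ y → HasDerivAt h (h' s) s) →
      (∀ s, x ≤ s → s ≤ y → 0 ≤ h' s) → h x ≤ h y := by
    intro h h' hd hn
    have hmono : MonotoneOn h (Icc x y) := by
      apply monotoneOn_of_deriv_nonneg (convex_Icc x y)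
      · intro s hs
        exact (hd s hs.1 hs.2).continuousAt.continuousWithinAt
      · intro s hs
        have hs' := interior_subset hs
        exact (hd s hs'.1 hs'.2).differentiableAt.differentiableWithinAt
      · intro s hs
        have hs' := interior_subset hs
        rw [(hd s hs'.1 hs'.2).deriv]
        exact hn s hs'.1 hs'.2
    exact hmono (left_mem_Icc.2 hxy) (right_mem_Icc.2 hxy) hxy
  have h1 := key (fun s => g s - f s) (fun s => g' s - f' s)
    (fun s h1 h2 => (hg s h1 h2).sub (hf s h1 h2))
    (fun s h1 h2 => by have := (abs_le.1 (hle s h1 h2)).2; linarith)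
  have h2 := key (fun s => g s + f s) (fun s => g' s + f' s)
    (fun s h1 h2 => (hg s h1 h2).add (hf s h1 h2))
    (fun s h1 h2 => by have := (abs_le.1 (hle s h1 h2)).1; linarith)
  rw [abs_le]
  constructor <;> linarith

/-- Antiderivative of an exponential weight, used as a comparison function. -/
lemma hasDerivAt_exp_weight (C μ c s : ℝ) (hμ : μ ≠ 0) :
    HasDerivAt (fun s => C / μ * Real.exp (μ * (s + c))) (C * Real.exp (μ * (s + c))) s := by
  have h : HasDerivAt (fun s : ℝ => μ * (s + c)) μ s := by
    simpa using ((hasDerivAt_id s).add_const c).const_mul μ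
  refine ((h.exp).const_mul (C / μ)).congr_deriv ?_
  field_simp

/-- Uniqueness for the Cauchy problem on the line `p + q = 0` for `∂_q ∂_p w = U w`. On the
triangle below `(p₀, q₀)` the maximum of `|w| exp (-μ (p + q))` is at most half of itself. -/
lemma cauchy_zero {U w a : ℝ → ℝ → ℝ} (hU : Continuous (uncurry U)) (hw : Continuous (uncurry w))
    (hwp : ∀ p q, HasDerivAt (fun p => w p q) (a p q) p)
    (haq : ∀ p q, HasDerivAt (fun q => a p q) (U p q * w p q) q)
    {p₀ q₀ : ℝ} (h0 : 0 ≤ p₀ + q₀)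
    (hw0 : ∀ q, -p₀ ≤ q → q ≤ q₀ → w (-q) q = 0)
    (ha0 : ∀ q, -p₀ ≤ q → q ≤ q₀ → a (-q) q = 0) : w p₀ q₀ = 0 := by
  set T : Set (ℝ × ℝ) := {z | z.1 ≤ p₀ ∧ z.2 ≤ q₀ ∧ 0 ≤ z.1 + z.2} with hT
  have hTc : IsCompact T := by
    have hcl : IsClosed T :=
      (isClosed_le continuous_fst continuous_const).inter
        ((isClosed_le continuous_snd continuous_const).inter
          (isClosed_le continuous_const (continuous_fst.add continuous_snd)))
    refine (isCompact_Icc (a := ((-q₀, -p₀) : ℝ × ℝ)) (b := (p₀, q₀))).of_isClosed_subset hcl ?_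
    rintro ⟨p, q⟩ ⟨h1, h2, h3⟩
    simp only at h1 h2 h3
    refine ⟨⟨?_, ?_⟩, ⟨h1, h2⟩⟩ <;> simp only <;> linarith
  have hmem : (p₀, q₀) ∈ T := ⟨le_rfl, le_rfl, h0⟩
  obtain ⟨K, hK⟩ := hTc.exists_bound_of_continuousOn hU.continuousOn
  have hK0 : 0 ≤ K := (norm_nonneg _).trans (hK _ hmem)
  set μ : ℝ := 1 + K with hμ
  have hμ0 : 0 < μ := by positivity
  have hgc : Continuous (fun z : ℝ × ℝ => |uncurry w z| * Real.exp (-(μ * (z.1 + z.2)))) := by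
    fun_prop
  obtain ⟨z, hz, hmax⟩ := hTc.exists_isMaxOn ⟨_, hmem⟩ hgc.continuousOn
  set m : ℝ := |uncurry w z| * Real.exp (-(μ * (z.1 + z.2))) with hm
  have hm0 : 0 ≤ m := by positivity
  have hwm : ∀ p q, p ≤ p₀ → q ≤ q₀ → 0 ≤ p + q → |w p q| ≤ m * Real.exp (μ * (p + q)) := by
    intro p q h1 h2 h3
    have : |w p q| * Real.exp (-(μ * (p + q))) ≤ m :=
      hmax (show (p, q) ∈ T from ⟨h1, h2, h3⟩)
    rwa [Real.exp_neg, ← div_eq_mul_inv, div_le_iff₀ (Real.exp_pos _)] at this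
  have ham : ∀ p q, p ≤ p₀ → q ≤ q₀ → 0 ≤ p + q →
      |a p q| ≤ K * m / μ * Real.exp (μ * (p + q)) := by
    intro p q h1 h2 h3
    have := abs_sub_le_of_abs_deriv_le (x := -p) (y := q) (by linarith)
      (fun s _ _ => haq p s) (fun s _ _ => hasDerivAt_exp_weight (K * m) μ p s hμ0.ne')
      (fun s hs1 hs2 => by
        rw [abs_mul, mul_assoc]
        have e1 := hwm p s h1 (by linarith) (by linarith)
        have e2 : |U p s| ≤ K := hK (p, s) ⟨h1, by simp only; linarith, by simp only; linarith⟩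
        rw [add_comm s p]
        gcongr)
    have e : a p (-p) = 0 := by simpa using ha0 (-p) (by linarith) (by linarith)
    rw [e, sub_zero, add_comm q p] at this
    have : 0 ≤ K * m / μ * Real.exp (μ * (-p + p)) := by positivity
    linarith
  have hww : ∀ p q, p ≤ p₀ → q ≤ q₀ → 0 ≤ p + q →
      |w p q| ≤ K * m / μ / μ * Real.exp (μ * (p + q)) := by
    intro p q h1 h2 h3
    have := abs_sub_le_of_abs_deriv_le (x := -q) (y := p) (by linarith)
      (fun s _ _ => hwp s q) (fun s _ _ => hasDerivAt_exp_weight (K * m / μ) μ q s hμ0.ne')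
      (fun s hs1 hs2 => ham s q (by linarith) h2 (by linarith))
    rw [hw0 q (by linarith) h2, sub_zero] at this
    have : 0 ≤ K * m / μ / μ * Real.exp (μ * (-q + q)) := by positivity
    linarith
  have hmm : m ≤ m / 2 := by
    have h1 := hww z.1 z.2 hz.1 hz.2.1 hz.2.2
    have h2 : K * m / μ / μ ≤ m / 2 := by
      rw [div_div, div_le_iff₀ (by positivity)]
      nlinarith [mul_nonneg hm0 (sq_nonneg K)]
    calc m ≤ (K * m / μ / μ * Real.exp (μ * (z.1 + z.2))) * Real.exp (-(μ * (z.1 + z.2))) := by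
          rw [hm]; exact mul_le_mul_of_nonneg_right h1 (Real.exp_pos _).le
      _ = K * m / μ / μ := by rw [mul_assoc, ← Real.exp_add]; simp
      _ ≤ m / 2 := h2
  have hm1 : m = 0 := by linarith
  have := hwm p₀ q₀ le_rfl le_rfl h0
  rw [hm1, zero_mul] at this
  exact abs_nonpos_iff.1 this

/-- A solution of `∂_q ∂_p w = -U w` in null coordinates `p = t - x`, `q = t + x`, together with
its two null derivatives `a = ∂_p w` and `b = ∂_q w`. -/
structure NullSol (U w a b : ℝ → ℝ → ℝ) : Prop where
  contU : Continuous (uncurry U)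
  contw : Continuous (uncurry w)
  conta : Continuous (uncurry a)
  dwp : ∀ p q, HasDerivAt (fun p => w p q) (a p q) p
  dwq : ∀ p q, HasDerivAt (fun q => w p q) (b p q) q
  daq : ∀ p q, HasDerivAt (fun q => a p q) (-(U p q * w p q)) q
  dbp : ∀ p q, HasDerivAt (fun p => b p q) (-(U p q * w p q)) p

/-- A solution vanishing at `t = 0` is odd under the time reversal `(p, q) ↦ (-q, -p)`. -/
lemma NullSol.odd {U w a b : ℝ → ℝ → ℝ} (h : NullSol U w a b)
    (hsym : ∀ p q, U (-q) (-p) = U p q) (hw0 : ∀ q, w (-q) q = 0)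
    (hab : ∀ q, a (-q) q = b (-q) q) (p q : ℝ) : w p q = -w (-q) (-p) := by
  have key : ∀ p q, 0 ≤ p + q → w p q + w (-q) (-p) = 0 := by
    intro p q hpq
    refine cauchy_zero (U := fun p q => -U p q) (w := fun p q => w p q + w (-q) (-p))
      (a := fun p q => a p q - b (-q) (-p)) h.contU.neg ?_ ?_ ?_ hpq ?_ ?_
    · have : Continuous (fun z : ℝ × ℝ => uncurry w (-z.2, -z.1)) :=
        h.contw.comp (by fun_prop)
      exact h.contw.add this
    · intro p q
      have h1 := (h.dwq (-q) (-p)).comp p (hasDerivAt_neg p)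
      refine ((h.dwp p q).add h1).congr_deriv ?_
      ring
    · intro p q
      have h1 := (h.dbp (-q) (-p)).comp q (hasDerivAt_neg q)
      refine ((h.daq p q).sub h1).congr_deriv ?_
      rw [hsym]; ring
    · intro q _ _
      simp [hw0]
    · intro q _ _
      simp [hab]
  rcases le_total 0 (p + q) with hpq | hpq
  · linarith [key p q hpq]
  · have := key (-q) (-p) (by linarith)
    rw [neg_neg, neg_neg] at this
    linarith

lemma arctan_sub_le (x y : ℝ) : Real.arctan x - Real.arctan y ≤ 4 := by
  have h1 := Real.arctan_lt_pi_div_two x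
  have h2 := Real.neg_pi_div_two_lt_arctan y
  linarith [Real.pi_le_four]

lemma hasDerivAt_const_mul_arctan (C s : ℝ) :
    HasDerivAt (fun s => C * Real.arctan s) (C * (1 / (1 + s ^ 2))) s :=
  (Real.hasDerivAt_arctan s).const_mul C

/-- The source term `U w` is integrable in `q`, with the explicit primitive `arctan`. -/
lemma NullSol.abs_a_sub_le {U w a b : ℝ → ℝ → ℝ} (h : NullSol U w a b) {p D N x y : ℝ}
    (hD : 0 ≤ D) (hxy : x ≤ y)
    (hU : ∀ q, x ≤ q → q ≤ y → |U p q| ≤ D / (1 + q ^ 2))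
    (hw : ∀ q, x ≤ q → q ≤ y → |w p q| ≤ N) :
    |a p y - a p x| ≤ 4 * D * N := by
  have hN : 0 ≤ N := (abs_nonneg _).trans (hw x le_rfl hxy)
  have := abs_sub_le_of_abs_deriv_le hxy (fun s _ _ => h.daq p s)
    (fun s _ _ => hasDerivAt_const_mul_arctan (D * N) s)
    (fun s hs1 hs2 => by
      rw [abs_neg, abs_mul]
      calc |U p s| * |w p s| ≤ D / (1 + s ^ 2) * N := by
            have := hU s hs1 hs2
            have := hw s hs1 hs2
            gcongr
        _ = D * N * (1 / (1 + s ^ 2)) := by ring)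
  have h2 := mul_le_mul_of_nonneg_left (arctan_sub_le y x) (mul_nonneg hD hN)
  linarith

/-- A priori bound in a strip `-R ≤ p ≤ P`, `R ≤ q` reaching null infinity, for a solution that
vanishes on the initial ray `p = -R`. -/
lemma NullSol.bounded {U w a b : ℝ → ℝ → ℝ} (h : NullSol U w a b) {R P D : ℝ} (hRP : -R ≤ P)
    (hD : 0 ≤ D)
    (hU : ∀ p q, -R ≤ p → p ≤ P → R ≤ q → |U p q| ≤ D / (1 + q ^ 2))
    (hw0 : ∀ q, R ≤ q → w (-R) q = 0) :
    ∃ B, ∀ p q, -R ≤ p → p ≤ P → R ≤ q → |w p q| ≤ B := by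
  have hac : Continuous (fun p => a p R) := h.conta.comp (by fun_prop : Continuous fun p => (p, R))
  obtain ⟨C, hC⟩ := (isCompact_Icc (a := -R) (b := P)).exists_bound_of_continuousOn hac.continuousOn
  have hC0 : 0 ≤ C := (norm_nonneg _).trans (hC (-R) ⟨le_rfl, hRP⟩)
  set μ : ℝ := 8 * D + 1 with hμ
  have hμ0 : 0 < μ := by positivity
  refine ⟨2 * (C * (P + R)) * Real.exp (μ * (P + R)), fun p₁ Q hp1 hp2 hQ => ?_⟩
  -- The bound does not depend on the truncation `q ≤ Q`, which makes the strip compact.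
  have hbox : IsCompact (Icc (-R) P ×ˢ Icc R Q) := isCompact_Icc.prod isCompact_Icc
  have hgc : Continuous (fun z : ℝ × ℝ => |uncurry w z| * Real.exp (-(μ * (z.1 + R)))) := by
    have := h.contw
    fun_prop
  have hmem : (p₁, Q) ∈ Icc (-R) P ×ˢ Icc R Q := ⟨⟨hp1, hp2⟩, ⟨hQ, le_rfl⟩⟩
  obtain ⟨z, hz, hmax⟩ := hbox.exists_isMaxOn ⟨_, hmem⟩ hgc.continuousOn
  set m : ℝ := |uncurry w z| * Real.exp (-(μ * (z.1 + R))) with hm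
  have hm0 : 0 ≤ m := by positivity
  have hwm : ∀ p q, -R ≤ p → p ≤ P → R ≤ q → q ≤ Q → |w p q| ≤ m * Real.exp (μ * (p + R)) := by
    intro p q h1 h2 h3 h4
    have : |w p q| * Real.exp (-(μ * (p + R))) ≤ m :=
      hmax (show (p, q) ∈ Icc (-R) P ×ˢ Icc R Q from ⟨⟨h1, h2⟩, ⟨h3, h4⟩⟩)
    rwa [Real.exp_neg, ← div_eq_mul_inv, div_le_iff₀ (Real.exp_pos _)] at this
  have ham : ∀ p q, -R ≤ p → p ≤ P → R ≤ q → q ≤ Q →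
      |a p q| ≤ C + 4 * D * m * Real.exp (μ * (p + R)) := by
    intro p q h1 h2 h3 h4
    have e1 := h.abs_a_sub_le hD h3 (fun s hs _ => hU p s h1 h2 hs)
      (fun s hs hs' => hwm p s h1 h2 hs (hs'.trans h4))
    have e2 : |a p R| ≤ C := hC p ⟨h1, h2⟩
    have e3 := abs_sub_abs_le_abs_sub (a p q) (a p R)
    linarith
  have hww : ∀ p q, -R ≤ p → p ≤ P → R ≤ q → q ≤ Q →
      |w p q| ≤ C * (P + R) + 4 * D * m / μ * Real.exp (μ * (p + R)) := by
    intro p q h1 h2 h3 h4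
    have e := abs_sub_le_of_abs_deriv_le h1 (fun s _ _ => h.dwp s q)
      (fun s _ _ => ((hasDerivAt_id s).const_mul C).add
        (hasDerivAt_exp_weight (4 * D * m) μ R s hμ0.ne'))
      (fun s hs1 hs2 => by
        have := ham s q hs1 (hs2.trans h2) h3 h4
        simpa using this)
    rw [hw0 q h3, sub_zero] at e
    simp only [id, Pi.add_apply] at e
    have e2 : 0 ≤ 4 * D * m / μ * Real.exp (μ * (-R + R)) := by positivity
    nlinarith [mul_le_mul_of_nonneg_left h2 hC0]
  have hmm : m ≤ 2 * (C * (P + R)) := by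
    have h1 := hww z.1 z.2 hz.1.1 hz.1.2 hz.2.1 hz.2.2
    have h2 : 4 * D * m / μ ≤ m / 2 := by
      rw [div_le_iff₀ (by positivity)]
      nlinarith
    have h3 : Real.exp (-(μ * (z.1 + R))) ≤ 1 := by
      rw [Real.exp_le_one_iff]
      have : 0 ≤ μ * (z.1 + R) := mul_nonneg hμ0.le (by linarith [hz.1.1])
      linarith
    have h4 : 0 ≤ C * (P + R) := mul_nonneg hC0 (by linarith)
    have : m ≤ C * (P + R) + 4 * D * m / μ :=
      calc m ≤ (C * (P + R) + 4 * D * m / μ * Real.exp (μ * (z.1 + R))) *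
            Real.exp (-(μ * (z.1 + R))) := by
            rw [hm]; exact mul_le_mul_of_nonneg_right h1 (Real.exp_pos _).le
        _ = C * (P + R) * Real.exp (-(μ * (z.1 + R))) + 4 * D * m / μ := by
            rw [add_mul, mul_assoc (4 * D * m / μ), ← Real.exp_add]; simp
        _ ≤ C * (P + R) + 4 * D * m / μ := by nlinarith
    linarith
  have hCP : 0 ≤ C * (P + R) := mul_nonneg hC0 (by linarith)
  have hR : Real.exp (μ * (p₁ + R)) ≤ Real.exp (μ * (P + R)) := by gcongr
  calc |w p₁ Q| ≤ m * Real.exp (μ * (p₁ + R)) := hwm p₁ Q hp1 hp2 hQ le_rfl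
    _ ≤ _ := by gcongr

/-- Uniqueness for the Goursat problem with data on the ray `p = -R` and at null infinity
`q = ∞`: the zero radiation field forces `∂_p w → 0`, so `∂_p w` can be recovered by integrating
`U w` from infinity, and a weighted bound on `w` improves itself by a factor two. -/
lemma NullSol.goursat {U w a b : ℝ → ℝ → ℝ} (h : NullSol U w a b) {R P D : ℝ} (hRP : -R ≤ P)
    (hD : 0 ≤ D)
    (hU : ∀ p q, -R ≤ p → p ≤ P → R ≤ q → |U p q| ≤ D / (1 + q ^ 2))
    (hw0 : ∀ q, R ≤ q → w (-R) q = 0)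
    (hrad : ∀ p, Tendsto (fun q => a p q + b p q) atTop (nhds 0))
    {p q : ℝ} (hp : -R ≤ p) (hpP : p ≤ P) (hq : R ≤ q) : w p q = 0 := by
  obtain ⟨B, hB⟩ := h.bounded hRP hD hU hw0
  have hB0 : 0 ≤ B := (abs_nonneg _).trans (hB p q hp hpP hq)
  have hb0 : ∀ q, R < q → b (-R) q = 0 := by
    intro q hq
    have h1 : (fun q => w (-R) q) =ᶠ[nhds q] fun _ => 0 := by
      filter_upwards [lt_mem_nhds hq] with s hs using hw0 s hs.le
    exact (h.dwq (-R) q).unique ((hasDerivAt_const q (0 : ℝ)).congr_of_eventuallyEq h1)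
  have hblim : ∀ p, -R ≤ p → p ≤ P → Tendsto (fun q => b p q) atTop (nhds 0) := by
    intro p h1 h2
    have hlim : Tendsto (fun q : ℝ => D * B * (p + R) / (1 + q ^ 2)) atTop (nhds 0) := by
      apply Tendsto.const_div_atTop
      exact tendsto_atTop_add_const_left _ _ (tendsto_pow_atTop two_ne_zero)
    refine squeeze_zero_norm' ?_ hlim
    filter_upwards [eventually_gt_atTop R] with q hq
    have e := abs_sub_le_of_abs_deriv_le h1 (fun s _ _ => h.dbp s q)
      (fun s _ _ => (hasDerivAt_id s).const_mul (D / (1 + q ^ 2) * B))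
      (fun s hs1 hs2 => by
        have e1 := hU s q hs1 (hs2.trans h2) hq.le
        have e2 := hB s q hs1 (hs2.trans h2) hq.le
        rw [abs_neg, abs_mul, mul_one]
        gcongr)
    rw [hb0 q hq, sub_zero] at e
    simp only [id] at e
    rw [Real.norm_eq_abs]
    calc |b p q| ≤ _ := e
      _ = _ := by ring
  have halim : ∀ p, -R ≤ p → p ≤ P → Tendsto (fun q => a p q) atTop (nhds 0) := by
    intro p h1 h2
    simpa using (hrad p).sub (hblim p h1 h2)
  set μ : ℝ := 8 * D + 1 with hμ
  have hμ0 : 0 < μ := by positivity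
  have step : ∀ m, 0 ≤ m →
      (∀ p q, -R ≤ p → p ≤ P → R ≤ q → |w p q| ≤ m * Real.exp (μ * (p + R))) →
      (∀ p q, -R ≤ p → p ≤ P → R ≤ q → |w p q| ≤ m / 2 * Real.exp (μ * (p + R))) := by
    intro m hm0 hwm
    have ham : ∀ p q, -R ≤ p → p ≤ P → R ≤ q →
        |a p q| ≤ 4 * D * m * Real.exp (μ * (p + R)) := by
      intro p q h1 h2 h3
      have hl : Tendsto (fun y => |a p y - a p q|) atTop (nhds |0 - a p q|) :=
        ((halim p h1 h2).sub_const _).abs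
      rw [zero_sub, abs_neg] at hl
      refine le_of_tendsto hl ?_
      filter_upwards [eventually_ge_atTop q] with y hy
      have := h.abs_a_sub_le hD hy (fun s hs _ => hU p s h1 h2 (h3.trans hs))
        (fun s hs _ => hwm p s h1 h2 (h3.trans hs))
      linarith
    intro p q h1 h2 h3
    have e := abs_sub_le_of_abs_deriv_le h1 (fun s _ _ => h.dwp s q)
      (fun s _ _ => hasDerivAt_exp_weight (4 * D * m) μ R s hμ0.ne')
      (fun s hs1 hs2 => ham s q hs1 (hs2.trans h2) h3)
    rw [hw0 q h3, sub_zero] at e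
    have e2 : 0 ≤ 4 * D * m / μ * Real.exp (μ * (-R + R)) := by positivity
    have e3 : 4 * D * m / μ ≤ m / 2 := by
      rw [div_le_iff₀ (by positivity)]
      nlinarith
    have e4 := mul_le_mul_of_nonneg_right e3 (Real.exp_pos (μ * (p + R))).le
    linarith
  have hall : ∀ n : ℕ, ∀ p q, -R ≤ p → p ≤ P → R ≤ q →
      |w p q| ≤ B / 2 ^ n * Real.exp (μ * (p + R)) := by
    intro n
    induction n with
    | zero =>
      intro p q h1 h2 h3
      have e1 : 1 ≤ Real.exp (μ * (p + R)) :=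
        Real.one_le_exp (mul_nonneg hμ0.le (by linarith))
      have := hB p q h1 h2 h3
      rw [pow_zero, div_one]
      nlinarith
    | succ n ih =>
      have := step (B / 2 ^ n) (by positivity) ih
      rwa [div_div, ← pow_succ] at this
  have hlim : Tendsto (fun n : ℕ => B / 2 ^ n * Real.exp (μ * (p + R))) atTop (nhds 0) := by
    have h1 : Tendsto (fun n : ℕ => B / (2 : ℝ) ^ n) atTop (nhds 0) :=
      Tendsto.const_div_atTop (tendsto_pow_atTop_atTop_of_one_lt one_lt_two) _
    simpa using h1.mul_const (Real.exp (μ * (p + R)))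
  have := ge_of_tendsto' hlim (fun n => hall n p q hp hpP hq)
  exact abs_nonpos_iff.1 this

/-- Vanishing of the solution, in null coordinates: finite speed, the Goursat problem from
infinity and oddness in time give `w = 0` on `{x ≥ R}`; then the Cauchy problem with `x` as the
evolution variable propagates this to the whole plane. -/
lemma NullSol.eq_zero {U w a b : ℝ → ℝ → ℝ} (h : NullSol U w a b)
    (hsym : ∀ p q, U (-q) (-p) = U p q) (hw0 : ∀ q, w (-q) q = 0)
    (hab : ∀ q, a (-q) q = b (-q) q) {R : ℝ} (ha0 : ∀ q, R ≤ q → a (-q) q = 0)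
    (hU : ∀ P, ∃ D, 0 ≤ D ∧ ∀ p q, -R ≤ p → p ≤ P → R ≤ q → |U p q| ≤ D / (1 + q ^ 2))
    (hrad : ∀ p, Tendsto (fun q => a p q + b p q) atTop (nhds 0)) (p q : ℝ) :
    w p q = 0 := by
  have haq' : ∀ p q, HasDerivAt (fun q => a p q) (-U p q * w p q) q := by
    intro p q
    refine (h.daq p q).congr_deriv ?_
    ring
  have hfinite : ∀ p q, 0 ≤ p + q → p ≤ -R → w p q = 0 := by
    intro p q hpq hp
    exact cauchy_zero (U := fun p q => -U p q) h.contU.neg h.contw h.dwp haq' hpq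
      (fun q _ _ => hw0 q) (fun q hq _ => ha0 q (by linarith))
  have hfuture : ∀ p q, R ≤ q → 0 ≤ p + q → w p q = 0 := by
    intro p q hq hpq
    rcases le_total p (-R) with hp | hp
    · exact hfinite p q hpq hp
    · obtain ⟨D, hD, hUD⟩ := hU p
      exact h.goursat hp hD hUD (fun q hq => hfinite _ _ (by linarith) le_rfl) hrad hp le_rfl hq
  have hext : ∀ p q, 2 * R ≤ q - p → w p q = 0 := by
    intro p q hpq
    rcases le_total 0 (p + q) with h0 | h0
    · exact hfuture p q (by linarith) h0
    · rw [h.odd hsym hw0 hab, hfuture (-q) (-p) (by linarith) (by linarith), neg_zero]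
  have haext : ∀ p q, 2 * R < q - p → a p q = 0 := by
    intro p q hpq
    have h1 : (fun p => w p q) =ᶠ[nhds p] fun _ => 0 := by
      filter_upwards [gt_mem_nhds (show p < q - 2 * R by linarith)] with s hs
      exact hext s q (by linarith)
    exact (h.dwp p q).unique ((hasDerivAt_const p (0 : ℝ)).congr_of_eventuallyEq h1)
  rcases le_total (2 * R) (q - p) with hx | hx
  · exact hext p q hx
  -- The reflection `q ↦ 2 * R + 2 - q` turns the timelike line `x = R + 1` into `p + q = 0`.
  · have := cauchy_zero (U := fun p q => U p (2 * R + 2 - q)) (w := fun p q => w p (2 * R + 2 - q))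
      (a := fun p q => a p (2 * R + 2 - q)) (p₀ := p) (q₀ := 2 * R + 2 - q)
      (h.contU.comp (by fun_prop : Continuous fun z : ℝ × ℝ => (z.1, 2 * R + 2 - z.2)))
      (h.contw.comp (by fun_prop : Continuous fun z : ℝ × ℝ => (z.1, 2 * R + 2 - z.2)))
      (fun p q => h.dwp p _)
      (fun p q => by
        refine ((h.daq p (2 * R + 2 - q)).comp q
          ((hasDerivAt_id q).const_sub (2 * R + 2))).congr_deriv ?_
        simp)
      (by linarith)
      (fun q _ _ => hext _ _ (by linarith)) (fun q _ _ => haext _ _ (by linarith))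
    simpa using this

/-! ### The Regge–Wheeler equation -/

/-- The inverse `ρ` of the tortoise coordinate, with `ρ' = 1 - 2M/ρ`. In the variable
`y = log (r - 2M)` the tortoise coordinate is `y ↦ 2M + exp y + 2M y`, an increasing bijection
of the real line. -/
lemma exists_radius (M : ℝ) (hM : 0 < M) :
    ∃ ρ : ℝ → ℝ, (∀ x, 2 * M < ρ x) ∧ (∀ x, rstar M (ρ x) = x) ∧
      (∀ r, 2 * M < r → ρ (rstar M r) = r) ∧
      ∀ x, HasDerivAt ρ (1 - 2 * M / ρ x) x := by
  set h : ℝ → ℝ := fun y => 2 * M + Real.exp y + 2 * M * y with hh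
  have hmono : StrictMono h := by
    intro x y hxy
    have h1 := Real.exp_lt_exp.2 hxy
    have h2 : 2 * M * x < 2 * M * y := by gcongr
    simp only [hh]; linarith
  have hcont : Continuous h := by fun_prop
  have htop : Tendsto h atTop atTop := by
    refine tendsto_atTop_mono (f := fun y => 2 * M * y) (fun y => ?_)
      (tendsto_id.const_mul_atTop (by positivity))
    have := Real.exp_pos y
    simp only [hh]; linarith
  have hbot : Tendsto h atBot atBot := by
    have h1 : Tendsto (fun y : ℝ => 2 * M * y) atBot atBot :=
      tendsto_id.const_mul_atBot (by positivity)
    have h2 : Tendsto (fun y : ℝ => 2 * M + 1 + 2 * M * y) atBot atBot :=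
      tendsto_atBot_add_const_left _ _ h1
    refine tendsto_atBot_mono' atBot ?_ h2
    filter_upwards [eventually_le_atBot (0 : ℝ)] with y hy
    have := Real.exp_le_one_iff.2 hy
    simp only [hh]; linarith
  have hsurj : Function.Surjective h := hcont.surjective htop hbot
  set e := hmono.orderIsoOfSurjective h hsurj with he
  have heh : ∀ y, e y = h y := fun y => rfl
  have hes : ∀ x, h (e.symm x) = x := fun x => by rw [← heh]; exact e.apply_symm_apply x
  have hrs : ∀ y, rstar M (2 * M + Real.exp y) = h y := by
    intro y
    simp [rstar, hh]
  refine ⟨fun x => 2 * M + Real.exp (e.symm x), fun x => ?_, fun x => ?_, fun r hr => ?_,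
    fun x => ?_⟩
  · have := Real.exp_pos (e.symm x)
    linarith
  · simp only [hrs, hes]
  · have h1 : r = 2 * M + Real.exp (Real.log (r - 2 * M)) := by
      rw [Real.exp_log (by linarith)]; ring
    have h2 : e.symm (rstar M r) = Real.log (r - 2 * M) := by
      rw [h1, hrs, ← heh, e.symm_apply_apply, ← h1]
    simp only [h2]
    exact h1.symm
  · have hpos : 0 < Real.exp (e.symm x) + 2 * M := by positivity
    have hd : HasDerivAt h (Real.exp (e.symm x) + 2 * M) (e.symm x) := by
      have h1 := ((Real.hasDerivAt_exp (e.symm x)).const_add (2 * M)).add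
        ((hasDerivAt_id (e.symm x)).const_mul (2 * M))
      exact h1.congr_deriv (by simp)
    have hinv : HasDerivAt e.symm (Real.exp (e.symm x) + 2 * M)⁻¹ x :=
      hd.of_local_left_inverse e.symm.continuous.continuousAt hpos.ne'
        (Filter.Eventually.of_forall hes)
    refine (hinv.exp.const_add (2 * M)).congr_deriv ?_
    have : 2 * M + Real.exp (e.symm x) ≠ 0 := by linarith
    field_simp
    ring

/-- A function smooth on the Schwarzschild exterior. -/
def SmoothExt (M : ℝ) (u : ℝ → ℝ → ℝ) : Prop :=
  ContDiffOn ℝ ∞ (Function.uncurry u) ((Set.univ : Set ℝ) ×ˢ Set.Ioi (2*M))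

lemma isOpen_ext (M : ℝ) : IsOpen ((Set.univ : Set ℝ) ×ˢ Set.Ioi (2*M)) :=
  isOpen_univ.prod isOpen_Ioi

lemma SmoothExt.contDiffAt {M : ℝ} {u : ℝ → ℝ → ℝ} (h : SmoothExt M u) {t r : ℝ}
    (hr : 2 * M < r) : ContDiffAt ℝ ∞ (uncurry u) (t, r) :=
  ContDiffOn.contDiffAt h ((isOpen_ext M).mem_nhds ⟨mem_univ _, hr⟩)

lemma SmoothExt.hasFDerivAt {M : ℝ} {u : ℝ → ℝ → ℝ} (h : SmoothExt M u) {t r : ℝ}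
    (hr : 2 * M < r) : HasFDerivAt (uncurry u) (fderiv ℝ (uncurry u) (t, r)) (t, r) :=
  ((h.contDiffAt hr).differentiableAt (by simp)).hasFDerivAt

lemma SmoothExt.pdt_eq {M : ℝ} {u : ℝ → ℝ → ℝ} (h : SmoothExt M u) {t r : ℝ}
    (hr : 2 * M < r) : pdt u t r = fderiv ℝ (uncurry u) (t, r) (1, 0) :=
  ((h.hasFDerivAt (t := t) hr).comp_hasDerivAt (f := fun s => (s, r)) t
    ((hasDerivAt_id t).prodMk (hasDerivAt_const t r))).deriv

lemma SmoothExt.pdr_eq {M : ℝ} {u : ℝ → ℝ → ℝ} (h : SmoothExt M u) {t r : ℝ}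
    (hr : 2 * M < r) : pdr u t r = fderiv ℝ (uncurry u) (t, r) (0, 1) :=
  ((h.hasFDerivAt (t := t) hr).comp_hasDerivAt (f := fun s => (t, s)) r
    ((hasDerivAt_const r t).prodMk (hasDerivAt_id r))).deriv

lemma SmoothExt.fderiv_apply {M : ℝ} {u : ℝ → ℝ → ℝ} (h : SmoothExt M u) (v : ℝ × ℝ) :
    ContDiffOn ℝ ∞ (fun z => fderiv ℝ (uncurry u) z v) ((Set.univ : Set ℝ) ×ˢ Set.Ioi (2*M)) :=
  (ContDiffOn.fderiv_of_isOpen h (isOpen_ext M) (by simp)).clm_apply contDiffOn_const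

lemma SmoothExt.pdt {M : ℝ} {u : ℝ → ℝ → ℝ} (h : SmoothExt M u) : SmoothExt M (pdt u) :=
  (h.fderiv_apply (1, 0)).congr fun _ hz => h.pdt_eq hz.2

lemma SmoothExt.pdr {M : ℝ} {u : ℝ → ℝ → ℝ} (h : SmoothExt M u) : SmoothExt M (pdr u) :=
  (h.fderiv_apply (0, 1)).congr fun _ hz => h.pdr_eq hz.2

/-- Chain rule along a curve in the exterior. -/
lemma SmoothExt.hasDerivAt_comp {M : ℝ} {u : ℝ → ℝ → ℝ} (h : SmoothExt M u) {f g : ℝ → ℝ}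
    {f' g' s : ℝ} (hf : HasDerivAt f f' s) (hg : HasDerivAt g g' s) (hr : 2 * M < g s) :
    HasDerivAt (fun s => u (f s) (g s))
      (_root_.pdt u (f s) (g s) * f' + _root_.pdr u (f s) (g s) * g') s := by
  refine ((h.hasFDerivAt (t := f s) hr).comp_hasDerivAt s (hf.prodMk hg)).congr_deriv ?_
  have : ((f', g') : ℝ × ℝ) = f' • (1, 0) + g' • (0, 1) := by simp
  rw [this, map_add, map_smul, map_smul, ← h.pdt_eq hr, ← h.pdr_eq hr]
  simp [mul_comm]

lemma SmoothExt.pdr_pdt {M : ℝ} {u : ℝ → ℝ → ℝ} (h : SmoothExt M u) {t r : ℝ}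
    (hr : 2 * M < r) : _root_.pdr (_root_.pdt u) t r = _root_.pdt (_root_.pdr u) t r := by
  have hd : ∀ v w : ℝ × ℝ, fderiv ℝ (fun z => fderiv ℝ (uncurry u) z v) (t, r) w =
      fderiv ℝ (fderiv ℝ (uncurry u)) (t, r) w v := by
    intro v w
    have h1 : DifferentiableAt ℝ (fderiv ℝ (uncurry u)) (t, r) :=
      ((h.contDiffAt hr).fderiv_right (m := 1) (by norm_cast)).differentiableAt (by simp)
    rw [fderiv_clm_apply h1 (differentiableAt_const v)]
    simp
  have hev : ∀ᶠ z in nhds (t, r), z ∈ (Set.univ : Set ℝ) ×ˢ Set.Ioi (2*M) :=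
    (isOpen_ext M).mem_nhds ⟨mem_univ _, hr⟩
  have e1 : uncurry (_root_.pdt u) =ᶠ[nhds (t, r)] fun z => fderiv ℝ (uncurry u) z (1, 0) := by
    filter_upwards [hev] with z hz using h.pdt_eq hz.2
  have e2 : uncurry (_root_.pdr u) =ᶠ[nhds (t, r)] fun z => fderiv ℝ (uncurry u) z (0, 1) := by
    filter_upwards [hev] with z hz using h.pdr_eq hz.2
  rw [h.pdt.pdr_eq hr, h.pdr.pdt_eq hr, e1.fderiv_eq, e2.fderiv_eq, hd, hd]
  exact ((h.contDiffAt hr).isSymmSndFDerivAt (by simp only [minSmoothness_of_isRCLikeNormedField]; norm_cast)).eq _ _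

/-- The Regge–Wheeler potential `(1 - 2M/r) (λ²/r² + 2M/r³)`. -/
noncomputable def rwPot (M lam r : ℝ) : ℝ := (1 - 2 * M / r) * (lam ^ 2 / r ^ 2 + 2 * M / r ^ 3)

/-- `∂_t (r u)`. -/
noncomputable def vt (ρ : ℝ → ℝ) (u : ℝ → ℝ → ℝ) (t x : ℝ) : ℝ := ρ x * pdt u t (ρ x)

/-- `∂_x (r u)`, with `x` the tortoise coordinate. -/
noncomputable def vx (M : ℝ) (ρ : ℝ → ℝ) (u : ℝ → ℝ → ℝ) (t x : ℝ) : ℝ :=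
  (1 - 2 * M / ρ x) * (u t (ρ x) + ρ x * pdr u t (ρ x))

/-- `v = r u` solves `∂²_t v - ∂²_x v + V v = 0`; in null coordinates this is
`∂_q ∂_p w = -(V / 4) w`. -/
lemma IsModeSolution.nullSol {M lam : ℝ} (hM : 0 < M) {u : ℝ → ℝ → ℝ} (hu : IsModeSolution M lam u)
    {ρ : ℝ → ℝ} (hρ : ∀ x, 2 * M < ρ x) (hρ' : ∀ x, HasDerivAt ρ (1 - 2 * M / ρ x) x) :
    NullSol (fun p q => rwPot M lam (ρ ((q - p) / 2)) / 4)
      (fun p q => ρ ((q - p) / 2) * u ((p + q) / 2) (ρ ((q - p) / 2)))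
      (fun p q => (vt ρ u ((p + q) / 2) ((q - p) / 2) - vx M ρ u ((p + q) / 2) ((q - p) / 2)) / 2)
      (fun p q => (vt ρ u ((p + q) / 2) ((q - p) / 2) + vx M ρ u ((p + q) / 2) ((q - p) / 2)) / 2)
    := by
  have hs : SmoothExt M u := hu.1
  have hρ0 : ∀ x, ρ x ≠ 0 := fun x => by have := hρ x; intro h; linarith
  have hρ2 : ∀ x, ρ x - 2 * M ≠ 0 := fun x => by have := hρ x; intro h; linarith
  have hρc : Continuous ρ := continuous_iff_continuousAt.2 fun x => (hρ' x).continuousAt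
  have hρc2 : Continuous (fun z : ℝ × ℝ => ρ ((z.2 - z.1) / 2)) := hρc.comp (by fun_prop)
  have hcomp : ∀ {f : ℝ → ℝ → ℝ}, SmoothExt M f →
      Continuous (fun z : ℝ × ℝ => f ((z.1 + z.2) / 2) (ρ ((z.2 - z.1) / 2))) := by
    intro f hf
    have h1 : Continuous (fun z : ℝ × ℝ => (((z.1 + z.2) / 2 : ℝ), ρ ((z.2 - z.1) / 2))) := by
      fun_prop
    refine continuous_iff_continuousAt.2 fun z => ?_
    exact (hf.contDiffAt (hρ _)).continuousAt.comp
      (f := fun z : ℝ × ℝ => (((z.1 + z.2) / 2 : ℝ), ρ ((z.2 - z.1) / 2))) h1.continuousAt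
  -- Derivatives of `v`, `v_t`, `v_x` along a curve `(t s, x s)`.
  have hv : ∀ {f g : ℝ → ℝ} {f' g' s : ℝ}, HasDerivAt f f' s → HasDerivAt g g' s →
      HasDerivAt (fun s => ρ (g s) * u (f s) (ρ (g s)))
        (vt ρ u (f s) (g s) * f' + vx M ρ u (f s) (g s) * g') s := by
    intro f g f' g' s hf hg
    have hr := (hρ' (g s)).comp s hg
    refine (hr.mul (hs.hasDerivAt_comp hf hr (hρ _))).congr_deriv ?_
    simp only [vt, vx, Function.comp]
    ring
  have hvt : ∀ {f g : ℝ → ℝ} {f' g' s : ℝ}, HasDerivAt f f' s → HasDerivAt g g' s →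
      HasDerivAt (fun s => vt ρ u (f s) (g s))
        (ρ (g s) * pdtt u (f s) (ρ (g s)) * f' + (1 - 2 * M / ρ (g s)) *
          (pdt u (f s) (ρ (g s)) + ρ (g s) * pdr (pdt u) (f s) (ρ (g s))) * g') s := by
    intro f g f' g' s hf hg
    have hr := (hρ' (g s)).comp s hg
    refine (hr.mul (hs.pdt.hasDerivAt_comp hf hr (hρ _))).congr_deriv ?_
    have : pdt (pdt u) (f s) (ρ (g s)) = pdtt u (f s) (ρ (g s)) := rfl
    simp only [Function.comp, this]
    ring
  have hvx : ∀ {f g : ℝ → ℝ} {f' g' s : ℝ}, HasDerivAt f f' s → HasDerivAt g g' s →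
      HasDerivAt (fun s => vx M ρ u (f s) (g s))
        ((1 - 2 * M / ρ (g s)) *
          (pdt u (f s) (ρ (g s)) + ρ (g s) * pdr (pdt u) (f s) (ρ (g s))) * f' +
         (ρ (g s) * pdtt u (f s) (ρ (g s)) +
           rwPot M lam (ρ (g s)) * (ρ (g s) * u (f s) (ρ (g s)))) * g') s := by
    intro f g f' g' s hf hg
    have hr := (hρ' (g s)).comp s hg
    have h1 := ((hr.inv (hρ0 _)).const_mul (2 * M)).const_sub 1
    have h2 := (hs.hasDerivAt_comp hf hr (hρ _)).add
      (hr.mul (hs.pdr.hasDerivAt_comp hf hr (hρ _)))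
    refine (h1.mul h2).congr_deriv ?_
    have e1 : pdr (pdr u) (f s) (ρ (g s)) = pdrr u (f s) (ρ (g s)) := rfl
    have e2 := hs.pdr_pdt (t := f s) (hρ (g s))
    have e3 := hu.2 (f s) (ρ (g s)) (hρ _)
    have n1 := hρ0 (g s)
    have n2 := hρ2 (g s)
    simp only [Function.comp, Pi.add_apply, Pi.mul_apply, Pi.inv_apply, e1, ← e2, rwPot]
    have e4 : pdtt u (f s) (ρ (g s)) = (1 - 2 * M / ρ (g s)) *
        (((ρ (g s) - 2 * M) / ρ (g s)) * pdrr u (f s) (ρ (g s)) +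
          (2 * (ρ (g s) - M) / ρ (g s) ^ 2) * pdr u (f s) (ρ (g s)) -
          lam ^ 2 / ρ (g s) ^ 2 * u (f s) (ρ (g s))) := by
      field_simp at e3 ⊢
      linear_combination -e3
    rw [e4]
    field_simp
    ring
  have dp : ∀ p q : ℝ, HasDerivAt (fun p => (p + q) / 2) (1 / 2) p := fun p q =>
    ((hasDerivAt_id p).add_const q).div_const 2
  have dq : ∀ p q : ℝ, HasDerivAt (fun q => (p + q) / 2) (1 / 2) q := fun p q =>
    ((hasDerivAt_id q).const_add p).div_const 2
  have dp' : ∀ p q : ℝ, HasDerivAt (fun p => (q - p) / 2) (-1 / 2) p := fun p q =>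
    ((hasDerivAt_id p).const_sub q).div_const 2
  have dq' : ∀ p q : ℝ, HasDerivAt (fun q => (q - p) / 2) (1 / 2) q := fun p q =>
    ((hasDerivAt_id q).sub_const p).div_const 2
  refine ⟨?_, ?_, ?_, fun p q => ?_, fun p q => ?_, fun p q => ?_, fun p q => ?_⟩
  · have : ∀ z : ℝ × ℝ, ρ ((z.2 - z.1) / 2) ≠ 0 := fun z => hρ0 _
    have h2 : ∀ z : ℝ × ℝ, ρ ((z.2 - z.1) / 2) ^ 2 ≠ 0 := fun z => pow_ne_zero _ (hρ0 _)
    have h3 : ∀ z : ℝ × ℝ, ρ ((z.2 - z.1) / 2) ^ 3 ≠ 0 := fun z => pow_ne_zero _ (hρ0 _)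
    exact ((continuous_const.sub (continuous_const.div hρc2 this)).mul
      ((continuous_const.div (hρc2.pow 2) h2).add
        (continuous_const.div (hρc2.pow 3) h3))).div_const 4
  · exact hρc2.mul (hcomp hs)
  · have h1 := hcomp hs
    have h2 := hcomp hs.pdt
    have h3 := hcomp hs.pdr
    exact ((hρc2.mul h2).sub ((continuous_const.sub (continuous_const.div hρc2 fun z => hρ0 _)).mul
      (h1.add (hρc2.mul h3)))).div_const 2
  · exact (hv (dp p q) (dp' p q)).congr_deriv (by ring)
  · exact (hv (dq p q) (dq' p q)).congr_deriv (by ring)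
  · exact (((hvt (dq p q) (dq' p q)).sub (hvx (dq p q) (dq' p q))).div_const 2).congr_deriv
      (by ring)
  · exact (((hvt (dp p q) (dp' p q)).add (hvx (dp p q) (dp' p q))).div_const 2).congr_deriv
      (by ring)

/-- The potential is `O(1 / q²)` along the outgoing rays of a strip `-R ≤ p ≤ P`. -/
lemma rwPot_bound {M lam : ℝ} (hM : 0 < M) {ρ : ℝ → ℝ} (hρ : ∀ x, 2 * M < ρ x)
    (hρs : ∀ x, rstar M (ρ x) = x) (R P : ℝ) :
    ∃ D, 0 ≤ D ∧ ∀ p q, -R ≤ p → p ≤ P → R ≤ q →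
      |rwPot M lam (ρ ((q - p) / 2)) / 4| ≤ D / (1 + q ^ 2) := by
  -- `log y ≤ y - 1` gives `x ≤ (1 + 2M) r`, hence `|q| ≤ c r` on the strip.
  set c : ℝ := 2 * (1 + 2 * M) + (|P| + |R|) / (2 * M) with hc
  have hc0 : 0 ≤ c := by positivity
  set A : ℝ := 1 / (4 * M ^ 2) + c ^ 2 with hA
  refine ⟨(lam ^ 2 + 1) * A, by positivity, fun p q h1 h2 h3 => ?_⟩
  set r := ρ ((q - p) / 2) with hr
  have hr2 : 2 * M < r := hρ _
  have hr0 : 0 < r := by linarith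
  have hx : (q - p) / 2 ≤ (1 + 2 * M) * r := by
    rw [← hρs ((q - p) / 2), ← hr, rstar]
    have := Real.log_le_sub_one_of_pos (show 0 < r - 2 * M by linarith)
    nlinarith
  have hPR : |P| + |R| ≤ (|P| + |R|) / (2 * M) * r := by
    rw [div_mul_eq_mul_div, le_div_iff₀ (by positivity)]
    have : 0 ≤ |P| + |R| := by positivity
    nlinarith
  have hq : |q| ≤ c * r := by
    rw [abs_le, hc]
    have := le_abs_self P
    have := neg_abs_le R
    have := abs_nonneg P
    have := abs_nonneg R
    have : 0 ≤ 2 * (1 + 2 * M) * r := by positivity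
    constructor <;> nlinarith
  have hq2 : 1 + q ^ 2 ≤ A * r ^ 2 := by
    have e1 : q ^ 2 ≤ (c * r) ^ 2 := sq_le_sq' (by linarith [(abs_le.1 hq).1]) (abs_le.1 hq).2
    have e2 : 1 ≤ 1 / (4 * M ^ 2) * r ^ 2 := by
      rw [div_mul_eq_mul_div, one_mul, le_div_iff₀ (by positivity)]
      nlinarith
    rw [hA]; nlinarith
  have hM1 : 2 * M / r ≤ 1 := by rw [div_le_one hr0]; linarith
  have hM0 : 0 ≤ 2 * M / r := by positivity
  have e : rwPot M lam r = (1 - 2 * M / r) * ((lam ^ 2 + 2 * M / r) / r ^ 2) := by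
    rw [rwPot]; field_simp
  have hV0 : 0 ≤ rwPot M lam r := by
    rw [e]
    exact mul_nonneg (by linarith) (by positivity)
  have hV : rwPot M lam r ≤ (lam ^ 2 + 1) / r ^ 2 := by
    rw [e]
    calc (1 - 2 * M / r) * ((lam ^ 2 + 2 * M / r) / r ^ 2)
        ≤ 1 * ((lam ^ 2 + 2 * M / r) / r ^ 2) := by gcongr; linarith
      _ ≤ (lam ^ 2 + 1) / r ^ 2 := by rw [one_mul]; gcongr
  rw [abs_of_nonneg (by positivity)]
  calc rwPot M lam r / 4 ≤ rwPot M lam r := by linarith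
    _ ≤ (lam ^ 2 + 1) / r ^ 2 := hV
    _ ≤ (lam ^ 2 + 1) * A / (1 + q ^ 2) := by
      rw [div_le_div_iff₀ (by positivity) (by positivity), mul_assoc]
      gcongr

/-- Null-infinity half of Corollary 1.4 (single mode): for data `(0, ψ)` with `ψ` smooth
and compactly supported in `(2M,∞)`, if the forward radiation field at null infinity
vanishes identically, then `ψ ≡ 0` on `(2M,∞)`. -/
theorem vanishing_radiation_field_null_infinity
    (M lam : ℝ) (hM : 0 < M) (hlam : 0 ≤ lam)
    (u : ℝ → ℝ → ℝ) (hu : IsModeSolution M lam u)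
    (ψ : ℝ → ℝ) (hφ : ∀ r : ℝ, 2*M < r → u 0 r = 0) (hψ : ∀ r : ℝ, ψ r = pdt u 0 r)
    (hsupp : ∃ r₁ r₂ : ℝ, 2*M < r₁ ∧ r₁ ≤ r₂ ∧
      ∀ r : ℝ, 2*M < r → r ∉ Set.Icc r₁ r₂ → ψ r = 0)
    (hg : IsFwdRadInfty M u (fun _ => 0)) :
    ∀ r : ℝ, 2*M < r → ψ r = 0 := by
  obtain ⟨ρ, hρ, hρs, hρr, hρ'⟩ := exists_radius M hM
  obtain ⟨r₁, r₂, hr1, hr12, hsupp⟩ := hsupp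
  have hmono : StrictMono ρ := by
    refine strictMono_of_hasDerivAt_pos hρ' fun x => ?_
    have := hρ x
    rw [sub_pos, div_lt_one (by linarith)]
    exact this
  have hρtop : Tendsto ρ atTop atTop := by
    refine tendsto_atTop_atTop.2 fun b => ⟨rstar M (max b (3 * M)), fun x hx => ?_⟩
    have := hmono.monotone hx
    rw [hρr _ (lt_of_lt_of_le (by linarith) (le_max_right _ _))] at this
    exact (le_max_left _ _).trans this
  have hpdr0 : ∀ r, 2 * M < r → pdr u 0 r = 0 := by
    intro r hr
    have h1 : (fun s => u 0 s) =ᶠ[nhds r] fun _ => 0 := by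
      filter_upwards [lt_mem_nhds hr] with s hs using hφ s hs
    rw [pdr, h1.deriv_eq, deriv_const]
  have hvx0 : ∀ x, vx M ρ u 0 x = 0 := by
    intro x
    rw [vx, hφ _ (hρ x), hpdr0 _ (hρ x)]
    ring
  have hN := hu.nullSol hM hρ hρ'
  have hzero := hN.eq_zero (R := rstar M r₂ + 1) ?_ ?_ ?_ ?_ ?_ ?_
  · intro r hr
    have h1 : ∀ t, u t r = 0 := by
      intro t
      have := hzero (t - rstar M r) (t + rstar M r)
      have e1 : (t - rstar M r + (t + rstar M r)) / 2 = t := by ring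
      have e2 : (t + rstar M r - (t - rstar M r)) / 2 = rstar M r := by ring
      rw [e1, e2, hρr r hr] at this
      exact (mul_eq_zero.1 this).resolve_left (by linarith)
    rw [hψ, pdt]
    simp [h1]
  · intro p q
    rw [show -p - -q = q - p by ring]
  · intro q
    rw [neg_add_cancel, zero_div, hφ _ (hρ _), mul_zero]
  · intro q
    rw [neg_add_cancel, zero_div, hvx0]
    ring
  · intro q hq
    have e : (q - -q) / 2 = q := by ring
    have hlt : r₂ < ρ q := by
      have := hmono (show rstar M r₂ < q by linarith)
      rwa [hρr _ (by linarith)] at this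
    rw [neg_add_cancel, zero_div, hvx0, e, vt, ← hψ,
      hsupp _ (hρ q) (fun h => absurd h.2 (not_le.2 hlt))]
    ring
  · intro P
    exact rwPot_bound hM hρ hρs _ P
  · intro p
    have hx : Tendsto (fun q : ℝ => ρ ((q - p) / 2)) atTop atTop :=
      hρtop.comp ((tendsto_atTop_add_const_right _ (-p) tendsto_id).atTop_div_const two_pos)
    refine ((hg p).comp hx).congr fun q => ?_
    have e : p + (q - p) / 2 = (p + q) / 2 := by ring
    simp only [Function.comp, hρs, vt, e]
    ring
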